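/- Let Cube be a generalized cube with minimal vertex I₀ (given by I₀ i = lo i for all i), let m ≥ 1, and let g be an edge-preserving bijection of Cube with g^m = id and g(I₀) = I₀. Let 𝓈 be a sign assignment on Cube and let 𝓉 : Cube → 𝔽₂ be a 0-cochain such that 𝓈(I,I') + 𝓈(gI,gI') = 𝓉(I) + 𝓉(I') for every edge (I,I'). Then for every vertex I of Cube one has 𝓉(I) + 𝓉(gI) + ⋯ + 𝓉(g^{m−1}I) = m·𝓉(I₀) in 𝔽₂; in particular, if m is odd and 𝓉(I₀) = 1, then this orbit sum equals 1 for every vertex I. -/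

import Mathlib

/-!
For an edge `(I, I')`, adding the relation `s (J, J') + s (g J, g J') = t J + t J'` over the
edges `(J, J') = (g^k I, g^k I')`, `0 ≤ k < m`, makes the left-hand side telescope in
characteristic two to `s (I, I') + s (g^m I, g^m I') = 2 s (I, I') = 0`. Hence the orbit sums of
`t` at `I` and `I'` agree (`orbit_sum_eq_of_isSucc`). Every vertex is joined to the minimal vertex
by a chain of edges (`Cube.induction_succ`), and the orbit sum at this fixed point of `g` is
`m * t lo`.
-/

/-- The generalized cube: functions `I : ι → ℤ` with `lo i ≤ I i ≤ hi i` for all `i`. -/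
def Cube {ι : Type*} (lo hi : ι → ℤ) : Set (ι → ℤ) :=
  {I | ∀ i, lo i ≤ I i ∧ I i ≤ hi i}

/-- `I'` is an immediate successor of `I`: exactly one coordinate increases by `1`. -/
def IsSucc {ι : Type*} (I I' : ι → ℤ) : Prop :=
  ∃ j, I' j = I j + 1 ∧ ∀ k, k ≠ j → I' k = I k

/-- A sign assignment on the cube. -/
def IsSignAssignment {ι : Type*} (lo hi : ι → ℤ)
    (s : (ι → ℤ) → (ι → ℤ) → ZMod 2) : Prop :=
  ∀ I I₁ I₂ I₁₂ : ι → ℤ, I ∈ Cube lo hi → I₁ ∈ Cube lo hi → I₂ ∈ Cube lo hi →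
    I₁₂ ∈ Cube lo hi → I₁ ≠ I₂ → IsSucc I I₁ → IsSucc I I₂ → IsSucc I₁ I₁₂ →
    IsSucc I₂ I₁₂ →
    s I I₁ + s I I₂ + s I₁ I₁₂ + s I₂ I₁₂ = 1

/-- A sum of consecutive pairs telescopes in characteristic two. -/
lemma sum_range_add_succ_zmod_two (f : ℕ → ZMod 2) (m : ℕ) :
    ∑ k ∈ Finset.range m, (f k + f (k + 1)) = f 0 + f m := by
  have h := Finset.sum_range_sub f m
  simp only [CharTwo.sub_eq_add] at h
  rw [add_comm (f 0), ← h]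
  exact Finset.sum_congr rfl fun k _ => add_comm _ _

/-- Induction along edges of the cube, starting at the minimal vertex: one descends from a vertex
by lowering a coordinate that exceeds its lower bound, which decreases the height
`∑ i, (I i - lo i)`. -/
lemma Cube.induction_succ {ι : Type*} [Fintype ι] {lo hi : ι → ℤ} {P : (ι → ℤ) → Prop}
    (base : P lo)
    (step : ∀ I I', I ∈ Cube lo hi → I' ∈ Cube lo hi → IsSucc I I' → P I → P I')
    {I : ι → ℤ} (hI : I ∈ Cube lo hi) : P I := by
  classical
  induction hn : ∑ i, (I i - lo i).toNat using Nat.strong_induction_on generalizing I with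
  | _ n ih =>
    by_cases h : I = lo
    · exact h ▸ base
    obtain ⟨j, hj⟩ := Function.ne_iff.mp h
    have hlt : lo j < I j := lt_of_le_of_ne (hI j).1 (Ne.symm hj)
    let J := Function.update I j (I j - 1)
    have hJj : J j = I j - 1 := Function.update_self ..
    have hJk : ∀ k, k ≠ j → J k = I k := fun k hk => Function.update_of_ne hk ..
    have hJ : J ∈ Cube lo hi := by
      intro k
      have := hI k
      by_cases hk : k = j
      · subst hk; omega
      · rw [hJk k hk]; exact this
    refine step J I hJ hI ⟨j, by omega, fun k hk => (hJk k hk).symm⟩ (ih _ ?_ hJ rfl)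
    rw [← hn]
    refine Finset.sum_lt_sum (fun k _ => ?_) ⟨j, Finset.mem_univ j, by omega⟩
    by_cases hk : k = j
    · subst hk; omega
    · rw [hJk k hk]

/-- The orbit sum of `t` is the same at the two ends of an edge. -/
lemma orbit_sum_eq_of_isSucc {ι : Type*} {lo hi : ι → ℤ} {m : ℕ} {g : (ι → ℤ) → (ι → ℤ)}
    (hgmaps : Set.MapsTo g (Cube lo hi) (Cube lo hi))
    (hgsucc : ∀ I I', I ∈ Cube lo hi → I' ∈ Cube lo hi → IsSucc I I' → IsSucc (g I) (g I'))
    (hgm : ∀ I, I ∈ Cube lo hi → g^[m] I = I)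
    {s : (ι → ℤ) → (ι → ℤ) → ZMod 2} {t : (ι → ℤ) → ZMod 2}
    (ht : ∀ I I', I ∈ Cube lo hi → I' ∈ Cube lo hi → IsSucc I I' →
      s I I' + s (g I) (g I') = t I + t I')
    {I I' : ι → ℤ} (hI : I ∈ Cube lo hi) (hI' : I' ∈ Cube lo hi) (hII' : IsSucc I I') :
    ∑ k ∈ Finset.range m, t (g^[k] I) = ∑ k ∈ Finset.range m, t (g^[k] I') := by
  have hsucc : ∀ k, IsSucc (g^[k] I) (g^[k] I') := by
    intro k
    induction k with
    | zero => exact hII'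
    | succ k ih =>
      rw [Function.iterate_succ_apply', Function.iterate_succ_apply']
      exact hgsucc _ _ (hgmaps.iterate k hI) (hgmaps.iterate k hI') ih
  rw [← CharTwo.add_eq_zero, ← Finset.sum_add_distrib]
  calc ∑ k ∈ Finset.range m, (t (g^[k] I) + t (g^[k] I'))
      = ∑ k ∈ Finset.range m,
          (s (g^[k] I) (g^[k] I') + s (g^[k + 1] I) (g^[k + 1] I')) := by
        refine Finset.sum_congr rfl fun k _ => ?_
        rw [Function.iterate_succ_apply', Function.iterate_succ_apply']
        exact (ht _ _ (hgmaps.iterate k hI) (hgmaps.iterate k hI') (hsucc k)).symm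
    _ = s I I' + s (g^[m] I) (g^[m] I') :=
        sum_range_add_succ_zmod_two (fun k => s (g^[k] I) (g^[k] I')) m
    _ = 0 := by rw [hgm I hI, hgm I' hI', CharTwo.add_self_eq_zero]

/-- Without the normalization `𝓉(I₀) = 0`, every orbit sum
`𝓉(I) + 𝓉(gI) + ⋯ + 𝓉(g^{m−1}I)` equals `m·𝓉(I₀)` in `𝔽₂`; in particular, if `m` is odd
and `𝓉(I₀) = 1`, then every orbit sum equals `1`. -/
theorem orbit_sum_eq_smul_basepoint {ι : Type*} [Fintype ι]
    (lo hi : ι → ℤ) (hlohi : ∀ i, lo i ≤ hi i) (m : ℕ) (hm : 1 ≤ m)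
    (g : (ι → ℤ) → (ι → ℤ))
    (hgbij : Set.BijOn g (Cube lo hi) (Cube lo hi))
    (hgsucc : ∀ I I', I ∈ Cube lo hi → I' ∈ Cube lo hi → IsSucc I I' →
      IsSucc (g I) (g I'))
    (hgsucc' : ∀ I I', I ∈ Cube lo hi → I' ∈ Cube lo hi → IsSucc (g I) (g I') →
      IsSucc I I')
    (hgm : ∀ I, I ∈ Cube lo hi → g^[m] I = I)
    (hgfix : g lo = lo)
    (s : (ι → ℤ) → (ι → ℤ) → ZMod 2) (hs : IsSignAssignment lo hi s)
    (t : (ι → ℤ) → ZMod 2)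
    (ht : ∀ I I', I ∈ Cube lo hi → I' ∈ Cube lo hi → IsSucc I I' →
      s I I' + s (g I) (g I') = t I + t I') :
    (∀ I, I ∈ Cube lo hi →
      ∑ k ∈ Finset.range m, t (g^[k] I) = (m : ZMod 2) * t lo) ∧
    (Odd m → t lo = 1 → ∀ I, I ∈ Cube lo hi →
      ∑ k ∈ Finset.range m, t (g^[k] I) = 1) := by
  have key : ∀ I, I ∈ Cube lo hi →
      ∑ k ∈ Finset.range m, t (g^[k] I) = (m : ZMod 2) * t lo := by
    intro I hI
    refine Cube.induction_succ
      (P := fun I => ∑ k ∈ Finset.range m, t (g^[k] I) = (m : ZMod 2) * t lo) ?_ ?_ hI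
    · simp [Function.iterate_fixed hgfix]
    · intro J J' hJ hJ' hJJ' h
      exact (orbit_sum_eq_of_isSucc hgbij.mapsTo hgsucc hgm ht hJ hJ' hJJ').symm.trans h
  refine ⟨key, fun hodd hlo I hI => ?_⟩
  rw [key I hI, hlo, mul_one, ZMod.natCast_eq_one_iff_odd.mpr hodd]
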